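/- Let k be a field, C a small category, and M : C → Vec_k a pointwise finite-dimensional persistence module. Then M decomposes as a direct sum M ≅ ⊕_{i ∈ Λ} M_i of indecomposable persistence modules M_i, each of which has a local endomorphism ring (i.e., for every endomorphism θ of M_i, either θ or 1 − θ is an isomorphism). -/

import Mathlib

namespace PModCat

open CategoryTheory

variable (k : Type) [Field k]

/-- A persistence module over a small category `C`: a functor from `C` to
`k`-vector spaces, given explicitly. -/
structure PersistenceModule (C : Type) [Category C] where
  V : C → Type
  [addCommGroup : ∀ x, AddCommGroup (V x)]
  [module : ∀ x, Module k (V x)]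
  map : ∀ {x y : C}, (x ⟶ y) → (V x →ₗ[k] V y)
  map_id : ∀ x : C, map (𝟙 x) = LinearMap.id
  map_comp : ∀ {x y z : C} (f : x ⟶ y) (g : y ⟶ z),
      map (f ≫ g) = (map g).comp (map f)

attribute [instance] PersistenceModule.addCommGroup PersistenceModule.module

variable {k}

/-- A morphism of persistence modules (a natural transformation). -/
structure Hom {C : Type} [Category C] (M N : PersistenceModule k C) where
  app : ∀ x, M.V x →ₗ[k] N.V x
  natural : ∀ {x y : C} (f : x ⟶ y), (N.map f).comp (app x) = (app y).comp (M.map f)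

/-- A morphism of persistence modules is an isomorphism iff it is pointwise bijective. -/
def IsIsoHom {C : Type} [Category C] {M N : PersistenceModule k C} (f : Hom M N) : Prop :=
  ∀ x, Function.Bijective (f.app x)

/-- Two persistence modules are isomorphic if there is a pointwise bijective
morphism between them. -/
def Isomorphic {C : Type} [Category C] (M N : PersistenceModule k C) : Prop :=
  ∃ f : Hom M N, IsIsoHom f

/-- The endomorphism `1 - θ` of `M`, for an endomorphism `θ` of `M`. -/
def oneSub {C : Type} [Category C] {M : PersistenceModule k C} (θ : Hom M M) : Hom M M where
  app x := LinearMap.id - θ.app x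
  natural {x y} f := by
    rw [LinearMap.comp_sub, LinearMap.sub_comp, θ.natural f, LinearMap.comp_id,
      LinearMap.id_comp]

/-- The direct sum of a family of persistence modules, taken pointwise
(`Π₀` is the finitely supported product, i.e. the direct sum). -/
noncomputable def directSum {C : Type} [Category C] {ι : Type}
    (N : ι → PersistenceModule k C) : PersistenceModule k C where
  V x := Π₀ i, (N i).V x
  map {x y} f := DFinsupp.mapRange.linearMap (fun i => (N i).map f)
  map_id x := by
    have h : (fun i => (N i).map (𝟙 x)) =
        fun i => (LinearMap.id : (N i).V x →ₗ[k] (N i).V x) :=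
      funext fun i => (N i).map_id x
    rw [h]
    exact DFinsupp.mapRange.linearMap_id
  map_comp {x y z} f g := by
    have h : (fun i => (N i).map (f ≫ g)) =
        fun i => ((N i).map g).comp ((N i).map f) :=
      funext fun i => (N i).map_comp f g
    rw [h]
    exact DFinsupp.mapRange.linearMap_comp _ _

/-- The binary direct sum of two persistence modules, taken pointwise. -/
def sum2 {C : Type} [Category C] (M N : PersistenceModule k C) : PersistenceModule k C where
  V x := M.V x × N.V x
  map f := (M.map f).prodMap (N.map f)
  map_id x := by
    rw [M.map_id, N.map_id]
    exact LinearMap.prodMap_id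
  map_comp f g := by
    rw [M.map_comp f g, N.map_comp f g]
    exact (LinearMap.prodMap_comp _ _ _ _).symm

/-- The zero persistence module predicate. -/
def IsZero {C : Type} [Category C] (M : PersistenceModule k C) : Prop :=
  ∀ x, ∀ v : M.V x, v = 0

/-- A persistence module is indecomposable if it is nonzero and whenever it is
isomorphic to a direct sum of two modules, one of the summands is zero. -/
def Indecomposable {C : Type} [Category C] (M : PersistenceModule k C) : Prop :=
  ¬ IsZero M ∧ ∀ M' M'' : PersistenceModule k C,
    Isomorphic M (sum2 M' M'') → IsZero M' ∨ IsZero M''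

end PModCat

namespace PModCat

open CategoryTheory

section Helpers

variable {k : Type} [Field k] {C : Type} [Category C]

theorem Hom.nat_apply {M N : PersistenceModule k C} (f : Hom M N) {x y : C} (a : x ⟶ y)
    (v : M.V x) : N.map a (f.app x v) = f.app y (M.map a v) :=
  LinearMap.congr_fun (f.natural a) v

/-- Inverse of an isomorphism. -/
theorem exists_inverse {M N : PersistenceModule k C} (f : Hom M N) (hf : IsIsoHom f) :
    ∃ g : Hom N M, (∀ x v, g.app x (f.app x v) = v) ∧ (∀ x w, f.app x (g.app x w) = w) := by
  let e : ∀ x, M.V x ≃ₗ[k] N.V x := fun x => LinearEquiv.ofBijective (f.app x) (hf x)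
  have he : ∀ x v, e x v = f.app x v := fun x v => rfl
  refine ⟨⟨fun x => (e x).symm.toLinearMap, ?_⟩, ?_, ?_⟩
  · intro x y a
    ext w
    apply (e y).injective
    simp only [LinearMap.comp_apply, LinearEquiv.coe_coe, LinearEquiv.apply_symm_apply]
    rw [he, ← f.nat_apply, ← he, LinearEquiv.apply_symm_apply]
  · intro x v
    exact (e x).symm_apply_apply v
  · intro x w
    exact (e x).apply_symm_apply w

theorem isomorphic_symm {M N : PersistenceModule k C} (h : Isomorphic M N) : Isomorphic N M := by
  obtain ⟨f, hf⟩ := h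
  obtain ⟨g, h1, h2⟩ := exists_inverse f hf
  exact ⟨g, fun x => ⟨Function.LeftInverse.injective (h2 x),
    Function.RightInverse.surjective (h1 x)⟩⟩

/-- A submodule of a persistence module. -/
def sub (M : PersistenceModule k C) (p : ∀ x, Submodule k (M.V x))
    (hp : ∀ {x y : C} (a : x ⟶ y), ∀ v ∈ p x, M.map a v ∈ p y) : PersistenceModule k C where
  V x := p x
  map a := (M.map a).restrict (hp a)
  map_id x := by
    ext v
    simp [M.map_id]
  map_comp a b := by
    ext v
    simp [M.map_comp]

/-- Fitting's lemma: a pointwise finite-dimensional indecomposable has local endomorphism ring. -/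
theorem fitting {N : PersistenceModule k C} (hfd : ∀ x, FiniteDimensional k (N.V x))
    (hN : Indecomposable N) (θ : Hom N N) : IsIsoHom θ ∨ IsIsoHom (oneSub θ) := by
  let t : ∀ x, Module.End k (N.V x) := fun x => θ.app x
  have hpow : ∀ {x y : C} (a : x ⟶ y) (n : ℕ) (v : N.V x),
      N.map a ((t x ^ n) v) = (t y ^ n) (N.map a v) := by
    intro x y a n
    induction n with
    | zero => intro v; simp
    | succ n ih =>
      intro v
      rw [pow_succ, pow_succ, Module.End.mul_apply, Module.End.mul_apply, ih]
      congr 1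
      exact θ.nat_apply a v
  let p : ∀ x, Submodule k (N.V x) := fun x => ⨆ n, LinearMap.ker (t x ^ n)
  let q : ∀ x, Submodule k (N.V x) := fun x => ⨅ n, LinearMap.range (t x ^ n)
  have hc : ∀ x, IsCompl (p x) (q x) := fun x =>
    LinearMap.isCompl_iSup_ker_pow_iInf_range_pow (t x)
  have hp : ∀ {x y : C} (a : x ⟶ y), ∀ v ∈ p x, N.map a v ∈ p y := by
    intro x y a
    change p x ≤ (p y).comap (N.map a)
    refine iSup_le fun n v hv => ?_
    refine Submodule.mem_iSup_of_mem n ?_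
    rw [LinearMap.mem_ker] at hv ⊢
    rw [← hpow, hv, map_zero]
  have hq : ∀ {x y : C} (a : x ⟶ y), ∀ v ∈ q x, N.map a v ∈ q y := by
    intro x y a v hv
    simp only [q, Submodule.mem_iInf] at hv ⊢
    intro n
    obtain ⟨w, rfl⟩ := hv n
    exact ⟨N.map a w, (hpow a n w).symm⟩
  have hiso : Isomorphic (sum2 (sub N p hp) (sub N q hq)) N := by
    refine ⟨⟨fun x => (Submodule.prodEquivOfIsCompl (p x) (q x) (hc x)).toLinearMap, ?_⟩, ?_⟩
    · intro x y a
      refine LinearMap.ext fun v => ?_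
      exact map_add (N.map a) (Subtype.val (p := (· ∈ p x)) v.1) (Subtype.val (p := (· ∈ q x)) v.2)
    · intro x
      exact (Submodule.prodEquivOfIsCompl (p x) (q x) (hc x)).bijective
  rcases hN.2 _ _ (isomorphic_symm hiso) with h | h
  · left
    intro x
    have hinj : Function.Injective (t x) := by
      rw [← LinearMap.ker_eq_bot, LinearMap.ker_eq_bot']
      intro v hv
      have hv' : v ∈ p x := Submodule.mem_iSup_of_mem 1 (by simpa using hv)
      exact congrArg Subtype.val (h x ⟨v, hv'⟩)
    exact ⟨hinj, LinearMap.injective_iff_surjective.1 hinj⟩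
  · right
    intro x
    have hinj : Function.Injective ((oneSub θ).app x) := by
      rw [← LinearMap.ker_eq_bot, LinearMap.ker_eq_bot']
      intro v hv
      have hv1 : t x v = v := by
        have : v - t x v = 0 := hv
        exact (sub_eq_zero.1 this).symm
      have hv' : v ∈ q x := by
        simp only [q, Submodule.mem_iInf]
        intro n
        refine ⟨v, ?_⟩
        induction n with
        | zero => simp
        | succ n ih => rw [pow_succ, Module.End.mul_apply, hv1, ih]
      exact congrArg Subtype.val (h x ⟨v, hv'⟩)
    exact ⟨hinj, LinearMap.injective_iff_surjective.1 hinj⟩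

/-- A pointwise internal direct sum decomposition gives an isomorphism. -/
theorem exists_directSum_iso {ι : Type} (M : PersistenceModule k C)
    (p : ι → ∀ x, Submodule k (M.V x))
    (hp : ∀ i, ∀ {x y : C} (a : x ⟶ y), ∀ v ∈ p i x, M.map a v ∈ p i y)
    (hind : ∀ x, iSupIndep fun i => p i x) (htop : ∀ x, ⨆ i, p i x = ⊤) :
    ∃ F : Hom (directSum fun i => sub M (p i) (hp i)) M, IsIsoHom F ∧
      ∀ [DecidableEq ι] i x (v : p i x), F.app x (DFinsupp.single i v) = (v : M.V x) := by
  classical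
  refine ⟨⟨fun x => DFinsupp.lsum ℕ (fun i => (p i x).subtype), ?_⟩, ?_, ?_⟩
  · intro x y a
    refine DFinsupp.lhom_ext fun i v => ?_
    have h1 : DFinsupp.lsum ℕ (fun i => (p i x).subtype) (DFinsupp.single i v) =
        (Subtype.val (p := (· ∈ p i x)) v) := DFinsupp.lsum_single ..
    have h2 : (directSum fun i => sub M (p i) (hp i)).map a (DFinsupp.single i v) =
        (DFinsupp.single i ((sub M (p i) (hp i)).map a v) :
          Π₀ i, (sub M (p i) (hp i)).V y) := by
      refine (DFinsupp.mapRange.linearMap_apply _ _).trans ?_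
      exact DFinsupp.mapRange_single ..
    have h3 : DFinsupp.lsum ℕ (fun i => (p i y).subtype)
        (DFinsupp.single i ((sub M (p i) (hp i)).map a v)) =
        M.map a (Subtype.val (p := (· ∈ p i x)) v) := DFinsupp.lsum_single ..
    refine (congrArg (M.map a) h1).trans (h3.symm.trans ?_)
    exact congrArg (DFinsupp.lsum ℕ (fun i => (p i y).subtype)) h2.symm
  · intro x
    exact DirectSum.isInternal_submodule_of_iSupIndep_of_iSup_eq_top (hind x) (htop x)
  · intro inst i x v
    have : inst = fun a b => Classical.propDecidable (a = b) := Subsingleton.elim _ _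
    subst this
    exact DFinsupp.lsum_single ..

/-- The projection onto the first summand of a binary direct sum. -/
theorem exists_proj (M' M'' : PersistenceModule k C) :
    ∃ T : Hom (sum2 M' M'') (sum2 M' M''),
      (∀ x s, T.app x (T.app x s) = T.app x s) ∧
      (¬ IsZero M' → ∃ x, ∃ s : (sum2 M' M'').V x, s ≠ 0 ∧ T.app x s = s) ∧
      (¬ IsZero M'' → ∃ x, ∃ s : (sum2 M' M'').V x, s ≠ 0 ∧ T.app x s = 0) := by
  refine ⟨⟨fun x => (LinearMap.inl k (M'.V x) (M''.V x)).comp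
    (LinearMap.fst k (M'.V x) (M''.V x)), ?_⟩, fun x s => rfl, ?_, ?_⟩
  · intro x y a
    refine LinearMap.ext fun v => ?_
    exact Prod.ext rfl (map_zero (M''.map a))
  · intro h
    simp only [IsZero, not_forall] at h
    obtain ⟨x, u, hu⟩ := h
    exact ⟨x, ((u, 0) : M'.V x × M''.V x), fun h0 => hu (congrArg Prod.fst h0), rfl⟩
  · intro h
    simp only [IsZero, not_forall] at h
    obtain ⟨x, u, hu⟩ := h
    exact ⟨x, ((0, u) : M'.V x × M''.V x), fun h0 => hu (congrArg Prod.snd h0), rfl⟩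

/-- A commuting set of idempotents. -/
def CommIdem (M : PersistenceModule k C) (B : Set (Hom M M)) : Prop :=
  (∀ e ∈ B, ∀ x v, e.app x (e.app x v) = e.app x v) ∧
  (∀ e ∈ B, ∀ f ∈ B, ∀ x v, e.app x (f.app x v) = f.app x (e.app x v))

theorem exists_maximal_commIdem (M : PersistenceModule k C) :
    ∃ B, Maximal (· ∈ {B | CommIdem M B}) B := by
  refine zorn_subset _ fun c hc hchain => ⟨⋃₀ c, ⟨?_, ?_⟩, fun s hs => Set.subset_sUnion_of_mem hs⟩
  · rintro e ⟨s, hs, he⟩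
    exact (hc hs).1 e he
  · rintro e ⟨s, hs, he⟩ f ⟨t, ht, hf⟩
    rcases hchain.total hs ht with h | h
    · exact (hc ht).2 e (h he) f hf
    · exact (hc hs).2 e he f (h hf)

theorem mem_of_maximal {M : PersistenceModule k C} {B : Set (Hom M M)}
    (hB : Maximal (· ∈ {B | CommIdem M B}) B) (e : Hom M M)
    (h1 : ∀ x v, e.app x (e.app x v) = e.app x v)
    (h2 : ∀ b ∈ B, ∀ x v, e.app x (b.app x v) = b.app x (e.app x v)) : e ∈ B := by
  have hins : CommIdem M (insert e B) := by
    refine ⟨?_, ?_⟩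
    · rintro b (rfl | hb)
      · exact h1
      · exact hB.1.1 b hb
    · rintro b (rfl | hb) c (rfl | hc) x v
      · rfl
      · exact h2 c hc x v
      · exact (h2 b hb x v).symm
      · exact hB.1.2 b hb c hc x v
  exact hB.2 hins (Set.subset_insert e B) (Set.mem_insert e B)

theorem maxGen_of_idem {V : Type} [AddCommGroup V] [Module k V] (e : Module.End k V)
    (he : ∀ v, e (e v) = e v) :
    (∀ μ, e.maxGenEigenspace μ = e.eigenspace μ) ∧ ⨆ μ, e.maxGenEigenspace μ = ⊤ := by
  have hidem : e * e = e := LinearMap.ext he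
  have htop : ⨆ μ, e.maxGenEigenspace μ = ⊤ := by
    rw [eq_top_iff]
    intro v _
    have hv : v = e v + (v - e v) := by abel
    rw [hv]
    refine Submodule.add_mem _ ?_ ?_
    · refine Submodule.mem_iSup_of_mem 1 ?_
      rw [Module.End.mem_maxGenEigenspace]
      exact ⟨1, by simp [he]⟩
    · refine Submodule.mem_iSup_of_mem 0 ?_
      rw [Module.End.mem_maxGenEigenspace]
      exact ⟨1, by simp [he]⟩
  refine ⟨fun μ => ?_, htop⟩
  refine le_antisymm ?_ ((e.genEigenspace μ).monotone le_top)
  intro v hv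
  rw [Module.End.mem_eigenspace_iff]
  -- split by the value of `μ`
  have hmaps : ∀ w ∈ e.maxGenEigenspace μ, e w ∈ e.maxGenEigenspace μ :=
    Module.End.mapsTo_maxGenEigenspace_of_comm (Commute.refl e) μ
  have key : ∀ ν w, e w = ν • w → w ∈ e.maxGenEigenspace μ → ν ≠ μ → w = 0 := by
    intro ν w hw hwμ hne
    have h1 : w ∈ e.maxGenEigenspace ν := by
      rw [Module.End.mem_maxGenEigenspace]
      exact ⟨1, by simp [hw]⟩
    exact (Submodule.disjoint_def.1 (e.disjoint_genEigenspace hne ⊤ ⊤)) w h1 hwμ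
  have hA := key 1 (e v) (by simp [he]) (hmaps v hv)
  have hB := key 0 (v - e v) (by simp [he]) (Submodule.sub_mem _ hv (hmaps v hv))
  by_cases h1 : μ = 1
  · subst h1
    have := hB zero_ne_one
    rw [one_smul]
    exact (sub_eq_zero.1 this).symm
  · have h := hA (Ne.symm h1)
    by_cases h0 : μ = 0
    · rw [h, h0, zero_smul]
    · have h' := hB (Ne.symm h0)
      rw [h, sub_zero] at h'
      rw [h', map_zero, smul_zero]

/-- Simultaneous eigenspaces. -/
def eig {M : PersistenceModule k C} (B : Set (Hom M M)) (χ : B → k) (x : C) :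
    Submodule k (M.V x) :=
  ⨅ b : B, Module.End.eigenspace (b.1.app x) (χ b)

theorem mem_eig {M : PersistenceModule k C} {B : Set (Hom M M)} {χ : B → k} {x : C} {v : M.V x} :
    v ∈ eig B χ x ↔ ∀ b : B, b.1.app x v = χ b • v := by
  simp [eig, Submodule.mem_iInf, Module.End.mem_eigenspace_iff]

theorem eig_map {M : PersistenceModule k C} (B : Set (Hom M M)) (χ : B → k) {x y : C}
    (a : x ⟶ y) (v : M.V x) (hv : v ∈ eig B χ x) : M.map a v ∈ eig B χ y := by
  rw [mem_eig] at hv ⊢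
  intro b
  rw [← b.1.nat_apply, hv, map_smul]

theorem eig_decomp {M : PersistenceModule k C} (hfd : ∀ x, FiniteDimensional k (M.V x))
    {B : Set (Hom M M)} (hB : CommIdem M B) (x : C) :
    (iSupIndep fun χ : B → k => eig B χ x) ∧ ⨆ χ : B → k, eig B χ x = ⊤ := by
  let f : B → Module.End k (M.V x) := fun b => b.1.app x
  have hm : ∀ b : B, _ := fun b => maxGen_of_idem (f b) (hB.1 b.1 b.2 x)
  have heq : (fun χ : B → k => eig B χ x) = fun χ : B → k => ⨅ b, (f b).maxGenEigenspace (χ b) := by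
    funext χ
    exact iInf_congr fun b => ((hm b).1 (χ b)).symm
  have hcomm : ∀ b c, Commute (f b) (f c) := fun b c =>
    LinearMap.ext fun v => hB.2 b.1 b.2 c.1 c.2 x v
  have hmaps : ∀ i j φ, Set.MapsTo (f i) ((f j).maxGenEigenspace φ) ((f j).maxGenEigenspace φ) :=
    fun i j φ => Module.End.mapsTo_maxGenEigenspace_of_comm (hcomm j i) φ
  have := hfd x
  rw [heq]
  exact ⟨Module.End.independent_iInf_maxGenEigenspace_of_forall_mapsTo f hmaps,
    Module.End.iSup_iInf_maxGenEigenspace_eq_top_of_forall_mapsTo f hmaps fun b => (hm b).2⟩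

theorem main (M : PersistenceModule k C) (hfd : ∀ x, FiniteDimensional k (M.V x)) :
    ∃ (ι : Type) (N : ι → PersistenceModule k C),
      (∀ i, Indecomposable (N i)) ∧
      (∀ i (θ : Hom (N i) (N i)), IsIsoHom θ ∨ IsIsoHom (oneSub θ)) ∧
      Isomorphic M (directSum N) := by
  classical
  obtain ⟨B, hB⟩ := exists_maximal_commIdem M
  let ι : Type := {χ : B → k // ∃ x, eig B χ x ≠ ⊥}
  have hind : ∀ x, iSupIndep fun i : ι => eig B i.1 x := fun x =>
    (eig_decomp hfd hB.1 x).1.comp Subtype.val_injective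
  have htop : ∀ x, ⨆ i : ι, eig B i.1 x = ⊤ := by
    intro x
    rw [eq_top_iff, ← (eig_decomp hfd hB.1 x).2]
    refine iSup_le fun χ => ?_
    by_cases h : eig B χ x = ⊥
    · rw [h]; exact bot_le
    · exact le_iSup (fun i : ι => eig B i.1 x) ⟨χ, x, h⟩
  let N : ι → PersistenceModule k C := fun i => sub M (eig B i.1) (eig_map B i.1)
  obtain ⟨F, hF, hFs⟩ := exists_directSum_iso M (fun i : ι => eig B i.1)
    (fun i => eig_map B i.1) hind htop
  have hindec : ∀ i, Indecomposable (N i) := by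
    intro i
    refine ⟨?_, ?_⟩
    · intro h0
      obtain ⟨x, hx⟩ := i.2
      exact hx ((Submodule.eq_bot_iff _).2 fun v hv => congrArg Subtype.val (h0 x ⟨v, hv⟩))
    · rintro M' M'' ⟨f, hf⟩
      obtain ⟨g, hgf, hfg⟩ := exists_inverse f hf
      obtain ⟨G, hGF, hFG⟩ := exists_inverse F hF
      let pr : ∀ x, M.V x →ₗ[k] (N i).V x := fun x => (DFinsupp.lapply i).comp (G.app x)
      have pr_same : ∀ x (v : (N i).V x), pr x v.1 = v := by
        intro x v
        have h : G.app x v.1 = (DFinsupp.single i v : Π₀ j, (N j).V x) :=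
          (congrArg (G.app x) (hFs i x v).symm).trans (hGF x _)
        exact (congrArg (fun w : Π₀ j, (N j).V x => w i) h).trans DFinsupp.single_eq_same
      have pr_ne : ∀ j, j ≠ i → ∀ x (v : (N j).V x), pr x v.1 = 0 := by
        intro j hj x v
        have h : G.app x v.1 = (DFinsupp.single j v : Π₀ j, (N j).V x) :=
          (congrArg (G.app x) (hFs j x v).symm).trans (hGF x _)
        exact (congrArg (fun w : Π₀ j, (N j).V x => w i) h).trans
          (DFinsupp.single_eq_of_ne hj.symm)
      have pr_nat : ∀ {x y : C} (a : x ⟶ y) (v : M.V x),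
          (N i).map a (pr x v) = pr y (M.map a v) := by
        intro x y a v
        exact congrArg (fun w : Π₀ j, (N j).V y => w i) (G.nat_apply a v)
      have pr_smul : ∀ (b : B) x v, pr x (b.1.app x v) = i.1 b • pr x v := by
        intro b x v
        have hv : v ∈ ⨆ i : ι, eig B i.1 x := htop x ▸ Submodule.mem_top
        induction hv using Submodule.iSup_induction' with
        | mem j w hw =>
          rw [mem_eig.1 hw b, map_smul]
          by_cases hj : j = i
          · subst hj; rfl
          · rw [pr_ne j hj x ⟨w, hw⟩, smul_zero, smul_zero]
        | zero => simp
        | add v w _ _ h1 h2 => rw [map_add, map_add, h1, h2, map_add, smul_add]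
      obtain ⟨T, hT, hT1, hT2⟩ := exists_proj M' M''
      let m : ∀ x, (N i).V x →ₗ[k] (N i).V x := fun x =>
        (g.app x).comp ((T.app x).comp (f.app x))
      have m_apply : ∀ x v, m x v = g.app x (T.app x (f.app x v)) := fun x v => rfl
      have m_idem : ∀ x v, m x (m x v) = m x v := by
        intro x v
        simp only [m_apply, hfg, hT]
      have m_nat : ∀ {x y : C} (a : x ⟶ y) (v : (N i).V x),
          (N i).map a (m x v) = m y ((N i).map a v) := by
        intro x y a v
        rw [m_apply, m_apply, g.nat_apply, T.nat_apply, f.nat_apply]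
      let e : Hom M M := ⟨fun x => (eig B i.1 x).subtype.comp ((m x).comp (pr x)), by
        intro x y a
        refine LinearMap.ext fun v => ?_
        change ((N i).map a (m x (pr x v))).1 = (m y (pr y (M.map a v))).1
        rw [m_nat, pr_nat]⟩
      have e_apply : ∀ x v, e.app x v = (m x (pr x v)).1 := fun x v => rfl
      have heB : e ∈ B := by
        refine mem_of_maximal hB e ?_ ?_
        · intro x v
          rw [e_apply, e_apply, pr_same, m_idem]
        · intro b hb x v
          rw [e_apply, e_apply, pr_smul ⟨b, hb⟩, map_smul]
          exact (mem_eig.1 (m x (pr x v)).2 ⟨b, hb⟩).symm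
      have hscal : ∀ x (v : (N i).V x), m x v = i.1 ⟨e, heB⟩ • v := by
        intro x v
        apply Subtype.ext
        have h := mem_eig.1 v.2 ⟨e, heB⟩
        change e.app x v.1 = _ at h
        rw [e_apply, pr_same] at h
        exact h
      have hscal' : ∀ x s, T.app x s = i.1 ⟨e, heB⟩ • s := by
        intro x s
        have h := congrArg (f.app x) (hscal x (g.app x s))
        rwa [m_apply, hfg, hfg, map_smul, hfg] at h
      by_contra hcon
      rw [not_or] at hcon
      obtain ⟨x, s, hs, hs1⟩ := hT1 hcon.1
      obtain ⟨y, t, ht, ht1⟩ := hT2 hcon.2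
      rw [hscal'] at hs1 ht1
      rcases smul_eq_zero.1 ht1 with h | h
      · rw [h, zero_smul] at hs1
        exact hs hs1.symm
      · exact ht h
  refine ⟨ι, N, hindec, fun i θ => fitting (fun x => ?_) (hindec i) θ, isomorphic_symm ⟨F, hF⟩⟩
  have := hfd x
  exact inferInstanceAs (FiniteDimensional k (eig B i.1 x))

end Helpers

end PModCat

theorem stmt0 {k : Type} [Field k] {C : Type} [CategoryTheory.SmallCategory C]
    (M : PModCat.PersistenceModule k C)
    (hfd : ∀ x, FiniteDimensional k (M.V x)) :
    ∃ (ι : Type) (N : ι → PModCat.PersistenceModule k C),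
      (∀ i, PModCat.Indecomposable (N i)) ∧
      (∀ i (θ : PModCat.Hom (N i) (N i)),
        PModCat.IsIsoHom θ ∨ PModCat.IsIsoHom (PModCat.oneSub θ)) ∧
      PModCat.Isomorphic M (PModCat.directSum N) := by
  exact PModCat.main M hfd
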